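/- arXiv:1705.02595 — 2 statements merged into one kernel-verified Lean document; each statement's English description precedes it below -/
import Mathlib

section
/- Let d ≥ 2 and let D ⊂ ℝ^d be a nonempty bounded open set. Let Φ : (0,∞) → (0,∞) be an increasing homeomorphism of (0,∞) onto itself satisfying the global weak scaling condition with exponents 2δ₁, 2δ₂ (0 < δ₁ ≤ δ₂ < 1), and let ψ : (0,∞) → (0,∞) be nondecreasing and satisfy the global weak scaling condition with exponents γ₁, γ₂ where 1/2 < γ₁ ≤ γ₂ < 1. Define g(r) := 1/(r^d·ψ(Φ(r)⁻¹)) and, for x, y ∈ D with x ≠ y, G̃(x,y) := min(Φ(δ_D(x))^{1/2}/Φ(|x−y|)^{1/2}, 1) · min(Φ(δ_D(y))^{1/2}/Φ(|x−y|)^{1/2}, 1) · g(|x−y|). Then there exists C ≥ 1 such that for every x ∈ D, C⁻¹·Φ(δ_D(x))^{1/2} ≤ ∫_D G̃(x,y) dy ≤ C·Φ(δ_D(x))^{1/2}. -/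
open MeasureTheory

/-- Scaling upper bound for the potential density divided by `√Φ`. -/
lemma exists_inv_sqrt_mul_le_rpow {Φ ψ : ℝ → ℝ} {c₁ δ₁ b₁ γ₁ M : ℝ}
    (hΦpos : ∀ r, 0 < r → 0 < Φ r) (hΦle : ∀ r R, 0 < r → r ≤ R → Φ r ≤ Φ R)
    (hc₁ : 0 < c₁)
    (hΦscale : ∀ r R : ℝ, 0 < r → r ≤ R → c₁ * (R / r) ^ (2 * δ₁) ≤ Φ R / Φ r)
    (hψpos : ∀ x : ℝ, 0 < x → 0 < ψ x) (hb₁ : 0 < b₁) (hγ₁ : 1 / 2 < γ₁)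
    (hψscale : ∀ r R : ℝ, 0 < r → r ≤ R → b₁ * (R / r) ^ γ₁ ≤ ψ R / ψ r) (hM : 0 < M) :
    ∃ K : ℝ, 0 < K ∧ ∀ r, 0 < r → r ≤ M →
      1 / (√(Φ r) * ψ ((Φ r)⁻¹)) ≤ K * r ^ (2 * δ₁ * (γ₁ - 1 / 2)) := by
  set ε := 2 * δ₁ * (γ₁ - 1 / 2)
  set S := Φ M
  have hSpos : 0 < S := hΦpos M hM
  have hψS : 0 < ψ S⁻¹ := hψpos _ (inv_pos.2 hSpos)
  set A := b₁ * ψ S⁻¹ * √S * (c₁ ^ (γ₁ - 1 / 2) * M ^ ε) with hA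
  have hApos : 0 < A := by positivity
  refine ⟨A⁻¹, inv_pos.2 hApos, fun r hr hrM => ?_⟩
  have hs : 0 < Φ r := hΦpos r hr
  have hψr : 0 < ψ (Φ r)⁻¹ := hψpos _ (inv_pos.2 hs)
  have hsS : Φ r ≤ S := hΦle r M hr hrM
  have h1 : b₁ * (S / Φ r) ^ γ₁ ≤ ψ (Φ r)⁻¹ / ψ S⁻¹ := by
    have := hψscale S⁻¹ (Φ r)⁻¹ (inv_pos.2 hSpos) (by gcongr)
    rwa [inv_div_inv] at this
  rw [le_div_iff₀ hψS] at h1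
  have hq : 0 < S / Φ r := by positivity
  have h2 : (c₁ * (M / r) ^ (2 * δ₁)) ^ (γ₁ - 1 / 2) ≤ (S / Φ r) ^ (γ₁ - 1 / 2) :=
    Real.rpow_le_rpow (by positivity) (hΦscale r M hr hrM) (by linarith)
  rw [Real.mul_rpow hc₁.le (by positivity), ← Real.rpow_mul (by positivity),
    Real.div_rpow hM.le hr.le] at h2
  have h3 : √(Φ r) * (S / Φ r) ^ γ₁ = √S * (S / Φ r) ^ (γ₁ - 1 / 2) := by
    have : (S / Φ r) ^ γ₁ = √(S / Φ r) * (S / Φ r) ^ (γ₁ - 1 / 2) := by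
      rw [Real.sqrt_eq_rpow, ← Real.rpow_add hq]
      ring_nf
    have hne : √(Φ r) ≠ 0 := (Real.sqrt_pos.2 hs).ne'
    rw [this, Real.sqrt_div hSpos.le]
    field_simp
  have hrε : 0 < r ^ ε := Real.rpow_pos_of_pos hr _
  have key : A / r ^ ε ≤ √(Φ r) * ψ (Φ r)⁻¹ := calc
    A / r ^ ε = b₁ * ψ S⁻¹ * √S * (c₁ ^ (γ₁ - 1 / 2) * (M ^ ε / r ^ ε)) := by
      rw [hA]; ring
    _ ≤ b₁ * ψ S⁻¹ * √S * (S / Φ r) ^ (γ₁ - 1 / 2) := by gcongr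
    _ = √(Φ r) * (b₁ * (S / Φ r) ^ γ₁ * ψ S⁻¹) := by
      linear_combination -(b₁ * ψ S⁻¹) * h3
    _ ≤ _ := by gcongr
  calc 1 / (√(Φ r) * ψ (Φ r)⁻¹) ≤ 1 / (A / r ^ ε) :=
        one_div_le_one_div_of_le (by positivity) key
    _ = A⁻¹ * r ^ ε := by field_simp

/-- Scaling upper bound for the reciprocal of the potential density. -/
lemma exists_pow_mul_le {Φ ψ : ℝ → ℝ} {c₂ δ₂ b₂ γ₂ M : ℝ} {d : ℕ} (hd : 2 ≤ d)
    (hΦpos : ∀ r, 0 < r → 0 < Φ r) (hΦle : ∀ r R, 0 < r → r ≤ R → Φ r ≤ Φ R)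
    (hc₂ : 0 < c₂) (hδ₂ : δ₂ < 1)
    (hΦscale : ∀ r R : ℝ, 0 < r → r ≤ R → Φ R / Φ r ≤ c₂ * (R / r) ^ (2 * δ₂))
    (hψpos : ∀ x : ℝ, 0 < x → 0 < ψ x) (hb₂ : 0 < b₂) (hγ₂0 : 0 ≤ γ₂) (hγ₂ : γ₂ < 1)
    (hψscale : ∀ r R : ℝ, 0 < r → r ≤ R → ψ R / ψ r ≤ b₂ * (R / r) ^ γ₂) (hM : 0 < M) :
    ∃ K : ℝ, 0 < K ∧ ∀ r, 0 < r → r ≤ M → r ^ d * ψ ((Φ r)⁻¹) ≤ K := by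
  set S := Φ M
  have hSpos : 0 < S := hΦpos M hM
  have hψS : 0 < ψ S⁻¹ := hψpos _ (inv_pos.2 hSpos)
  refine ⟨b₂ * ψ S⁻¹ * c₂ ^ γ₂ * M ^ d, by positivity, fun r hr hrM => ?_⟩
  have hs : 0 < Φ r := hΦpos r hr
  have hsS : Φ r ≤ S := hΦle r M hr hrM
  have h1 : ψ (Φ r)⁻¹ / ψ S⁻¹ ≤ b₂ * (S / Φ r) ^ γ₂ := by
    have := hψscale S⁻¹ (Φ r)⁻¹ (inv_pos.2 hSpos) (by gcongr)
    rwa [inv_div_inv] at this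
  rw [div_le_iff₀ hψS] at h1
  have h2 : (S / Φ r) ^ γ₂ ≤ (c₂ * (M / r) ^ (2 * δ₂)) ^ γ₂ :=
    Real.rpow_le_rpow (by positivity) (hΦscale r M hr hrM) hγ₂0
  rw [Real.mul_rpow hc₂.le (by positivity), ← Real.rpow_mul (by positivity)] at h2
  have h3 : (M / r) ^ (2 * δ₂ * γ₂) ≤ (M / r) ^ d := by
    rw [← Real.rpow_natCast]
    have hd' : (2 : ℝ) ≤ d := by exact_mod_cast hd
    exact Real.rpow_le_rpow_of_exponent_le ((one_le_div hr).2 hrM) (by nlinarith)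
  calc r ^ d * ψ (Φ r)⁻¹ ≤ r ^ d * (b₂ * (c₂ ^ γ₂ * (M / r) ^ d) * ψ S⁻¹) := by
        gcongr
        refine h1.trans ?_
        gcongr
        exact h2.trans (by gcongr)
    _ = b₂ * ψ S⁻¹ * c₂ ^ γ₂ * M ^ d := by
        rw [div_pow]
        field_simp

/-- The singularity `|x - y| ^ (ε - d)` is integrable over balls, uniformly in the centre. -/
lemma integrableOn_ball_dist_rpow {d : ℕ} (hd : 1 ≤ d) {ε : ℝ} (hε : 0 < ε) {R : ℝ} (hR : 0 < R)
    (x : EuclideanSpace ℝ (Fin d)) :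
    IntegrableOn (fun y => dist x y ^ (ε - d)) (Metric.ball x R) ∧
      ∫ y in Metric.ball x R, dist x y ^ (ε - d) =
        ∫ y in Metric.ball (0 : EuclideanSpace ℝ (Fin d)) R, ‖y‖ ^ (ε - d) := by
  have : Nonempty (Fin d) := ⟨⟨0, hd⟩⟩
  have h0 : IntegrableOn (fun y : EuclideanSpace ℝ (Fin d) => ‖y‖ ^ (ε - d))
      (Metric.ball 0 R) := by
    rw [integrableOn_fun_norm_addHaar volume (f := fun t : ℝ => t ^ (ε - d))]
    have h : IntegrableOn (fun t : ℝ => t ^ (ε - 1)) (Set.Ioo 0 R) :=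
      (intervalIntegral.integrableOn_Ioo_rpow_iff hR).2 (by linarith)
    refine h.congr_fun (fun t ht => ?_) measurableSet_Ioo
    simp only [finrank_euclideanSpace, Fintype.card_fin, smul_eq_mul]
    rw [← Real.rpow_natCast, ← Real.rpow_add ht.1]
    congr 1
    push_cast [hd]
    ring
  have hpre : (fun y => y - x) ⁻¹' Metric.ball 0 R = Metric.ball x R := by
    ext y
    simp [dist_eq_norm]
  have hmp : MeasurePreserving (fun y : EuclideanSpace ℝ (Fin d) => y - x) :=
    measurePreserving_sub_right volume x
  have hemb : MeasurableEmbedding (fun y : EuclideanSpace ℝ (Fin d) => y - x) :=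
    (MeasurableEquiv.subRight x).measurableEmbedding
  have hfun : (fun y => dist x y ^ (ε - d)) = (fun y => ‖y‖ ^ (ε - d)) ∘ (fun y => y - x) := by
    ext y
    simp [dist_comm x y, dist_eq_norm]
  constructor
  · rw [hfun, ← hpre]
    exact (hmp.integrableOn_comp_preimage hemb).2 h0
  · rw [hfun, ← hpre]
    exact hmp.setIntegral_preimage_emb hemb (fun y => ‖y‖ ^ (ε - d)) _

/-- A positive function monotone on `(0, ∞)` agrees there with a measurable function. -/
lemma exists_measurable_eqOn_Ioi {f : ℝ → ℝ} (hf : MonotoneOn f (Set.Ioi 0))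
    (hpos : ∀ r, 0 < r → 0 < f r) : ∃ g : ℝ → ℝ, Measurable g ∧ ∀ r, 0 < r → f r = g r := by
  refine ⟨fun r => if 0 < r then f r else 0, Monotone.measurable fun a b hab => ?_,
    fun r hr => by simp [hr]⟩
  by_cases ha : 0 < a
  · have hb := ha.trans_le hab
    simpa [ha, hb] using hf ha hb hab
  · by_cases hb : 0 < b
    · simpa [ha, hb] using (hpos b hb).le
    · simp [ha, hb]

/-- Lemma 6.6 of the paper, analytic form: if the lower weak scaling index of
`ψ` exceeds `1/2`, then `∫_D G̃(x,y) dy ≍ Φ(δ_D(x))^{1/2}`. -/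
theorem stmt_9 (d : ℕ) (hd : 2 ≤ d)
    (D : Set (EuclideanSpace ℝ (Fin d)))
    (hDopen : IsOpen D) (hDne : D.Nonempty) (hDbdd : Bornology.IsBounded D)
    (Φ : ℝ → ℝ)
    (hΦmono : StrictMonoOn Φ (Set.Ioi 0))
    (hΦbij : Set.BijOn Φ (Set.Ioi 0) (Set.Ioi 0))
    (c₁ c₂ δ₁ δ₂ : ℝ) (hc₁ : 0 < c₁) (hc₂ : 0 < c₂)
    (hδ₁ : 0 < δ₁) (hδ : δ₁ ≤ δ₂) (hδ₂ : δ₂ < 1)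
    (hΦscale : ∀ r R : ℝ, 0 < r → r ≤ R →
      c₁ * (R / r) ^ (2 * δ₁) ≤ Φ R / Φ r ∧ Φ R / Φ r ≤ c₂ * (R / r) ^ (2 * δ₂))
    (ψ : ℝ → ℝ) (hψpos : ∀ x : ℝ, 0 < x → 0 < ψ x)
    (hψmono : MonotoneOn ψ (Set.Ioi 0))
    (b₁ b₂ γ₁ γ₂ : ℝ) (hb₁ : 0 < b₁) (hb₂ : 0 < b₂)
    (hγ₁ : 1 / 2 < γ₁) (hγ : γ₁ ≤ γ₂) (hγ₂ : γ₂ < 1)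
    (hψscale : ∀ r R : ℝ, 0 < r → r ≤ R →
      b₁ * (R / r) ^ γ₁ ≤ ψ R / ψ r ∧ ψ R / ψ r ≤ b₂ * (R / r) ^ γ₂) :
    ∃ C : ℝ, 1 ≤ C ∧ ∀ x ∈ D,
      C⁻¹ * Real.sqrt (Φ (Metric.infDist x Dᶜ)) ≤
        (∫ y in D,
          min (Real.sqrt (Φ (Metric.infDist x Dᶜ)) / Real.sqrt (Φ (dist x y))) 1 *
            min (Real.sqrt (Φ (Metric.infDist y Dᶜ)) / Real.sqrt (Φ (dist x y))) 1 *
            (1 / (dist x y ^ d * ψ ((Φ (dist x y))⁻¹)))) ∧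
      (∫ y in D,
          min (Real.sqrt (Φ (Metric.infDist x Dᶜ)) / Real.sqrt (Φ (dist x y))) 1 *
            min (Real.sqrt (Φ (Metric.infDist y Dᶜ)) / Real.sqrt (Φ (dist x y))) 1 *
            (1 / (dist x y ^ d * ψ ((Φ (dist x y))⁻¹)))) ≤
        C * Real.sqrt (Φ (Metric.infDist x Dᶜ)) := by
  have : Nonempty (Fin d) := ⟨⟨0, by omega⟩⟩
  have hΦpos : ∀ r, 0 < r → 0 < Φ r := fun r hr => hΦbij.mapsTo hr
  have hΦle : ∀ r R, 0 < r → r ≤ R → Φ r ≤ Φ R :=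
    fun r R hr hrR => hΦmono.monotoneOn hr (hr.trans_le hrR) hrR
  -- a common bound for distances inside `D` and for the distance to the complement
  obtain ⟨z, hz⟩ : Dᶜ.Nonempty := by
    rw [Set.nonempty_compl]
    rintro rfl
    exact NormedSpace.unbounded_univ ℝ _ hDbdd
  obtain ⟨M₀, hM₀⟩ := Metric.isBounded_iff.1 (hDbdd.insert z)
  set M := max M₀ 1
  have hM : 0 < M := lt_of_lt_of_le one_pos (le_max_right _ _)
  have hdist : ∀ x ∈ D, ∀ y ∈ D, dist x y ≤ M := fun x hx y hy =>
    (hM₀ (Set.mem_insert_of_mem _ hx) (Set.mem_insert_of_mem _ hy)).trans (le_max_left _ _)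
  have hδM : ∀ x ∈ D, Metric.infDist x Dᶜ ≤ M := fun x hx =>
    (Metric.infDist_le_dist_of_mem hz).trans
      ((hM₀ (Set.mem_insert_of_mem _ hx) (Set.mem_insert _ _)).trans (le_max_left _ _))
  have hδpos : ∀ x ∈ D, 0 < Metric.infDist x Dᶜ := fun x hx =>
    (hDopen.isClosed_compl.notMem_iff_infDist_pos ⟨z, hz⟩).1 (fun h => h hx)
  obtain ⟨K₁, hK₁, hup⟩ := exists_inv_sqrt_mul_le_rpow hΦpos hΦle hc₁
    (fun r R h h' => (hΦscale r R h h').1) hψpos hb₁ hγ₁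
    (fun r R h h' => (hψscale r R h h').1) hM
  obtain ⟨K₂, hK₂, hlow⟩ := exists_pow_mul_le hd hΦpos hΦle hc₂ hδ₂
    (fun r R h h' => (hΦscale r R h h').2) hψpos hb₂ (by linarith) hγ₂
    (fun r R h h' => (hψscale r R h h').2) hM
  set ε := 2 * δ₁ * (γ₁ - 1 / 2)
  have hε : 0 < ε := by
    have : 0 < γ₁ - 1 / 2 := by linarith
    positivity
  set J := ∫ y in Metric.ball (0 : EuclideanSpace ℝ (Fin d)) (M + 1), ‖y‖ ^ (ε - d) with hJ
  have hJ0 : 0 ≤ J := integral_nonneg fun y => by positivity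
  -- a fixed ball well inside `D`
  obtain ⟨x₀, hx₀⟩ := hDne
  set ρ := Metric.infDist x₀ Dᶜ / 2 with hρdef
  have hρ : 0 < ρ := half_pos (hδpos x₀ hx₀)
  have hballδ : ∀ y ∈ Metric.ball x₀ ρ, ρ ≤ Metric.infDist y Dᶜ := fun y hy => by
    have h1 := Metric.infDist_le_infDist_add_dist (s := Dᶜ) (x := x₀) (y := y)
    have h2 := Metric.mem_ball'.1 hy
    linarith
  have hballD : Metric.ball x₀ ρ ⊆ D := fun y hy => by
    by_contra h
    have h1 := Metric.infDist_zero_of_mem (s := Dᶜ) h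
    have h2 := hballδ y hy
    linarith
  set v := volume.real (Metric.ball x₀ ρ)
  have hvpos : 0 < v :=
    ENNReal.toReal_pos (Metric.measure_ball_pos volume x₀ hρ).ne' measure_ball_lt_top.ne
  have hVM : 0 < √(Φ M) := Real.sqrt_pos.2 (hΦpos M hM)
  have hVρ : 0 < √(Φ ρ) := Real.sqrt_pos.2 (hΦpos ρ hρ)
  set m := (√(Φ M))⁻¹ * (√(Φ ρ) / √(Φ M)) * K₂⁻¹ with hm
  have hmpos : 0 < m := by positivity
  obtain ⟨Φ', hΦ'm, hΦ'⟩ := exists_measurable_eqOn_Ioi hΦmono.monotoneOn hΦpos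
  obtain ⟨ψ', hψ'm, hψ'⟩ := exists_measurable_eqOn_Ioi hψmono hψpos
  refine ⟨max 1 (max (K₁ * J) (v * m)⁻¹), le_max_left _ _, fun x hx => ?_⟩
  set a := √(Φ (Metric.infDist x Dᶜ)) with ha
  have hapos : 0 < a := Real.sqrt_pos.2 (hΦpos _ (hδpos x hx))
  set f : EuclideanSpace ℝ (Fin d) → ℝ := fun y =>
    min (a / √(Φ (dist x y))) 1 * min (√(Φ (Metric.infDist y Dᶜ)) / √(Φ (dist x y))) 1 *
      (1 / (dist x y ^ d * ψ ((Φ (dist x y))⁻¹))) with hf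
  have hne : ∀ᵐ y ∂(volume : Measure (EuclideanSpace ℝ (Fin d))), y ≠ x := by
    simp [ae_iff]
  have hf0 : ∀ y ∈ D, y ≠ x → 0 ≤ f y := fun y hy hyx => by
    have hr : 0 < dist x y := dist_pos.2 hyx.symm
    have := hψpos _ (inv_pos.2 (hΦpos _ hr))
    positivity
  have hfup : ∀ y ∈ D, y ≠ x → f y ≤ a * K₁ * dist x y ^ (ε - d) := fun y hy hyx => by
    have hr : 0 < dist x y := dist_pos.2 hyx.symm
    have hψr := hψpos _ (inv_pos.2 (hΦpos _ hr))
    have hV : 0 < √(Φ (dist x y)) := Real.sqrt_pos.2 (hΦpos _ hr)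
    calc f y ≤ a / √(Φ (dist x y)) * 1 * (1 / (dist x y ^ d * ψ ((Φ (dist x y))⁻¹))) := by
          simp only [hf]
          gcongr
          · exact min_le_left _ _
          · exact min_le_right _ _
      _ = a * (1 / (√(Φ (dist x y)) * ψ ((Φ (dist x y))⁻¹))) / dist x y ^ d := by
          field_simp
      _ ≤ a * (K₁ * dist x y ^ ε) / dist x y ^ d := by
          gcongr
          exact hup _ hr (hdist x hx y hy)
      _ = a * K₁ * dist x y ^ (ε - d) := by
          rw [Real.rpow_sub hr, Real.rpow_natCast]
          ring
  have hflow : ∀ y ∈ Metric.ball x₀ ρ, y ≠ x → a * m ≤ f y := fun y hy hyx => by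
    have hr : 0 < dist x y := dist_pos.2 hyx.symm
    have hrM := hdist x hx y (hballD hy)
    have hψr := hψpos _ (inv_pos.2 (hΦpos _ hr))
    have hV : 0 < √(Φ (dist x y)) := Real.sqrt_pos.2 (hΦpos _ hr)
    have hVle : √(Φ (dist x y)) ≤ √(Φ M) := Real.sqrt_le_sqrt (hΦle _ _ hr hrM)
    have haM : a ≤ √(Φ M) := Real.sqrt_le_sqrt (hΦle _ _ (hδpos x hx) (hδM x hx))
    have hρy : √(Φ ρ) ≤ √(Φ (Metric.infDist y Dᶜ)) :=
      Real.sqrt_le_sqrt (hΦle _ _ hρ (hballδ y hy))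
    have hρM : √(Φ ρ) ≤ √(Φ M) :=
      hρy.trans (Real.sqrt_le_sqrt (hΦle _ _ (hδpos y (hballD hy)) (hδM y (hballD hy))))
    have h1 : a / √(Φ M) ≤ min (a / √(Φ (dist x y))) 1 :=
      le_min (by gcongr) ((div_le_one hVM).2 haM)
    have h2 : √(Φ ρ) / √(Φ M) ≤ min (√(Φ (Metric.infDist y Dᶜ)) / √(Φ (dist x y))) 1 :=
      le_min (by gcongr) ((div_le_one hVM).2 hρM)
    have h3 : K₂⁻¹ ≤ 1 / (dist x y ^ d * ψ ((Φ (dist x y))⁻¹)) := by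
      rw [← one_div]
      exact one_div_le_one_div_of_le (by positivity) (hlow _ hr hrM)
    calc a * m = a / √(Φ M) * (√(Φ ρ) / √(Φ M)) * K₂⁻¹ := by rw [hm]; ring
      _ ≤ f y := by
          simp only [hf]
          gcongr
  have hmeas : AEStronglyMeasurable f (volume.restrict D) := by
    have hg : Measurable fun y : EuclideanSpace ℝ (Fin d) =>
        min (a / √(Φ' (dist x y))) 1 * min (√(Φ' (Metric.infDist y Dᶜ)) / √(Φ' (dist x y))) 1 *
          (1 / (dist x y ^ d * ψ' ((Φ' (dist x y))⁻¹))) := by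
      have h1 : Measurable fun y : EuclideanSpace ℝ (Fin d) => dist x y := by fun_prop
      have h2 : Measurable fun y : EuclideanSpace ℝ (Fin d) => Metric.infDist y Dᶜ :=
        measurable_infDist
      have h3 := hΦ'm.comp h1
      have h4 := hΦ'm.comp h2
      have h5 := hψ'm.comp h3.inv
      exact (((measurable_const.div h3.sqrt).min measurable_const).mul
        ((h4.sqrt.div h3.sqrt).min measurable_const)).mul
          (measurable_const.div ((h1.pow_const d).mul h5))
    refine hg.aestronglyMeasurable.congr ?_
    filter_upwards [ae_restrict_of_ae hne, ae_restrict_mem hDopen.measurableSet] with y hyx hy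
    have hr : 0 < dist x y := dist_pos.2 hyx.symm
    simp only [hf]
    rw [hψ' _ (inv_pos.2 (hΦpos _ hr)), hΦ' _ hr, hΦ' _ (hδpos y hy)]
  obtain ⟨hballint, hintJ⟩ := integrableOn_ball_dist_rpow (by omega : 1 ≤ d) hε
    (by positivity : 0 < M + 1) x
  have hDball : D ⊆ Metric.ball x (M + 1) := fun y hy => by
    have := hdist x hx y hy
    rw [Metric.mem_ball']
    linarith
  have hintD : IntegrableOn (fun y => a * K₁ * dist x y ^ (ε - d)) D :=
    (hballint.mono_set hDball).const_mul _
  have hfint : IntegrableOn f D := by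
    refine Integrable.mono' hintD hmeas ?_
    filter_upwards [ae_restrict_of_ae hne, ae_restrict_mem hDopen.measurableSet] with y hyx hy
    rw [Real.norm_of_nonneg (hf0 y hy hyx)]
    exact hfup y hy hyx
  constructor
  · have h1 : a * m * v ≤ ∫ y in D, f y := calc
      a * m * v = ∫ y in Metric.ball x₀ ρ, a * m := by
        rw [setIntegral_const, smul_eq_mul, mul_comm]
      _ ≤ ∫ y in Metric.ball x₀ ρ, f y :=
        setIntegral_mono_on_ae (integrableOn_const measure_ball_lt_top.ne)
          (hfint.mono_set hballD) measurableSet_ball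
          (hne.mono fun y hyx hy => hflow y hy hyx)
      _ ≤ ∫ y in D, f y := by
        refine setIntegral_mono_set hfint ?_ hballD.eventuallyLE
        filter_upwards [ae_restrict_of_ae hne, ae_restrict_mem hDopen.measurableSet]
          with y hyx hy using hf0 y hy hyx
    refine le_trans ?_ h1
    have h2 : (max 1 (max (K₁ * J) (v * m)⁻¹))⁻¹ ≤ v * m :=
      inv_le_of_inv_le₀ (by positivity) ((le_max_right _ _).trans (le_max_right _ _))
    calc _ ≤ v * m * a := by gcongr
      _ = a * m * v := by ring
  · calc ∫ y in D, f y ≤ ∫ y in D, a * K₁ * dist x y ^ (ε - d) :=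
          setIntegral_mono_on_ae hfint hintD hDopen.measurableSet
            (hne.mono fun y hyx hy => hfup y hy hyx)
      _ = a * K₁ * ∫ y in D, dist x y ^ (ε - d) := integral_const_mul _ _
      _ ≤ a * K₁ * J := by
          rw [hJ, ← hintJ]
          exact mul_le_mul_of_nonneg_left (setIntegral_mono_set hballint
            (ae_of_all _ fun y => by positivity) hDball.eventuallyLE) (by positivity)
      _ = K₁ * J * a := by ring
      _ ≤ _ := by
          gcongr
          exact (le_max_left _ _).trans (le_max_right _ _)
end

section
/- Let d ≥ 2 and let D ⊂ ℝ^d be a nonempty bounded open set. Let Φ : (0,∞) → (0,∞) be an increasing homeomorphism of (0,∞) onto itself satisfying the global weak scaling condition with exponents 2δ₁, 2δ₂ (0 < δ₁ ≤ δ₂ < 1), and let ψ : (0,∞) → (0,∞) be nondecreasing and satisfy the global weak scaling condition with exponents γ₁, γ₂ where 0 < γ₁ ≤ γ₂ < 1/2. Define g(r) := 1/(r^d·ψ(Φ(r)⁻¹)) and, for x, y ∈ D with x ≠ y, G̃(x,y) := min(Φ(δ_D(x))^{1/2}/Φ(|x−y|)^{1/2}, 1) · min(Φ(δ_D(y))^{1/2}/Φ(|x−y|)^{1/2},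 1) · g(|x−y|). Then there exists C ≥ 1 such that for every x ∈ D, C⁻¹/ψ(Φ(δ_D(x))⁻¹) ≤ ∫_D G̃(x,y) dy ≤ C/ψ(Φ(δ_D(x))⁻¹). -/
open MeasureTheory

section RadialIntegrals

open Module Set Metric

variable {E : Type*} [NormedAddCommGroup E] [NormedSpace ℝ E] [FiniteDimensional ℝ E]
  [Nontrivial E] [MeasurableSpace E] [BorelSpace E] (μ : Measure E) [μ.IsAddHaarMeasure]

theorem integrable_norm_pow_inv_mul_min_rpow {e : ℝ} (he : 0 < e) :
    Integrable (fun z : E => (‖z‖ ^ finrank ℝ E)⁻¹ * min (‖z‖ ^ e) (‖z‖ ^ (-e))) μ := by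
  rw [integrable_fun_norm_addHaar μ
    (f := fun r : ℝ => (r ^ finrank ℝ E)⁻¹ * min (r ^ e) (r ^ (-e)))]
  have key : IntegrableOn (fun r : ℝ => r⁻¹ * min (r ^ e) (r ^ (-e))) (Ioi 0) := by
    have hmeas : Measurable (fun r : ℝ => r⁻¹ * min (r ^ e) (r ^ (-e))) := by fun_prop
    have hnonneg : ∀ r : ℝ, 0 < r → 0 ≤ r⁻¹ * min (r ^ e) (r ^ (-e)) := fun r hr => by
      positivity
    rw [← Ioc_union_Ioi_eq_Ioi (zero_le_one (α := ℝ))]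
    refine IntegrableOn.union ?_ ?_
    · have h1 : IntegrableOn (fun r : ℝ => r ^ (e - 1)) (Ioc 0 1) := by
        rw [← intervalIntegrable_iff_integrableOn_Ioc_of_le zero_le_one]
        exact intervalIntegral.intervalIntegrable_rpow' (by linarith)
      refine Integrable.mono' h1 hmeas.aestronglyMeasurable ?_
      filter_upwards [ae_restrict_mem measurableSet_Ioc] with r hr
      rw [Real.norm_of_nonneg (hnonneg r hr.1), Real.rpow_sub_one hr.1.ne', div_eq_inv_mul]
      exact mul_le_mul_of_nonneg_left (min_le_left _ _) (inv_nonneg.2 hr.1.le)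
    · have h1 : IntegrableOn (fun r : ℝ => r ^ (-e - 1)) (Ioi 1) :=
        integrableOn_Ioi_rpow_of_lt (by linarith) one_pos
      refine Integrable.mono' h1 hmeas.aestronglyMeasurable ?_
      filter_upwards [ae_restrict_mem measurableSet_Ioi] with r hr
      have hr0 : (0 : ℝ) < r := one_pos.trans hr
      rw [Real.norm_of_nonneg (hnonneg r hr0), Real.rpow_sub_one hr0.ne', div_eq_inv_mul]
      exact mul_le_mul_of_nonneg_left (min_le_right _ _) (inv_nonneg.2 hr0.le)
  refine key.congr_fun (fun r hr => ?_) measurableSet_Ioi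
  have hr0 : (0 : ℝ) < r := hr
  obtain ⟨n, hn⟩ : ∃ n, finrank ℝ E = n + 1 := ⟨finrank ℝ E - 1, by
    have := finrank_pos (R := ℝ) (M := E); omega⟩
  simp only [hn, Nat.add_sub_cancel, smul_eq_mul, pow_succ]
  field_simp

theorem integrableOn_and_setIntegral_le_of_radial_bound {e : ℝ} (he : 0 < e) {D : Set E}
    (hD : MeasurableSet D) {G : E → ℝ} (hG : AEStronglyMeasurable G (μ.restrict D))
    {x : E} {δ K : ℝ} (hδ : 0 < δ) (hK : 0 ≤ K) (hG0 : ∀ y ∈ D, 0 ≤ G y)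
    (hGle : ∀ y ∈ D, G y ≤ K * ((dist x y ^ finrank ℝ E)⁻¹ *
      min ((dist x y / δ) ^ e) ((dist x y / δ) ^ (-e)))) :
    IntegrableOn G D μ ∧ ∫ y in D, G y ∂μ ≤
      K * ∫ z : E, (‖z‖ ^ finrank ℝ E)⁻¹ * min (‖z‖ ^ e) (‖z‖ ^ (-e)) ∂μ := by
  set F : E → ℝ := fun z => (‖z‖ ^ finrank ℝ E)⁻¹ * min (‖z‖ ^ e) (‖z‖ ^ (-e)) with hF
  have hF0 : ∀ z, 0 ≤ F z := fun z => by simp only [hF]; positivity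
  have hFint : Integrable F μ := integrable_norm_pow_inv_mul_min_rpow μ he
  have hscaled : Integrable (fun z => F (δ⁻¹ • z)) μ := hFint.comp_smul (inv_ne_zero hδ.ne')
  set M : E → ℝ := fun y => K * (δ ^ finrank ℝ E)⁻¹ * F (δ⁻¹ • (y - x)) with hM
  have hMint : Integrable M μ := (hscaled.comp_sub_right x).const_mul _
  have hM0 : ∀ y, 0 ≤ M y := fun y => mul_nonneg (by positivity) (hF0 _)
  have hGM : ∀ y ∈ D, G y ≤ M y := fun y hy => by
    refine (hGle y hy).trans_eq ?_
    have hn : ‖δ⁻¹ • (y - x)‖ = dist x y / δ := by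
      rw [norm_smul, Real.norm_of_nonneg (inv_nonneg.2 hδ.le), dist_comm, dist_eq_norm,
        div_eq_inv_mul]
    simp only [hM, hF, hn, div_pow]
    field_simp
  have hGint : IntegrableOn G D μ := by
    refine Integrable.mono' hMint.integrableOn hG ?_
    filter_upwards [ae_restrict_mem hD] with y hy
    rw [Real.norm_of_nonneg (hG0 y hy)]
    exact hGM y hy
  refine ⟨hGint, ?_⟩
  calc ∫ y in D, G y ∂μ ≤ ∫ y in D, M y ∂μ :=
        setIntegral_mono_on hGint hMint.integrableOn hD hGM
    _ ≤ ∫ y, M y ∂μ := setIntegral_le_integral hMint (Filter.Eventually.of_forall hM0)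
    _ = K * ∫ z, F z ∂μ := by
        simp only [hM]
        rw [integral_const_mul, integral_sub_right_eq_self (fun z => F (δ⁻¹ • z)) x,
          Measure.integral_comp_inv_smul_of_nonneg μ F hδ.le, smul_eq_mul]
        field_simp

theorem mul_measureReal_ball_le_setIntegral {D : Set E} (hD : MeasurableSet D) {G : E → ℝ}
    (hG : IntegrableOn G D μ) (hG0 : ∀ y ∈ D, 0 ≤ G y) {x : E} {r c : ℝ} (hr : 0 < r)
    (hball : ball x r ⊆ D) (hle : ∀ y ∈ ball x r, y ≠ x → c ≤ G y) :
    c * (r ^ finrank ℝ E * μ.real (ball (0 : E) 1)) ≤ ∫ y in D, G y ∂μ := by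
  have hae : (ball x r \ {x} : Set E) =ᵐ[μ] ball x r := sdiff_null_ae_eq_self (measure_singleton x)
  have hvol : μ.real (ball x r \ {x}) = r ^ finrank ℝ E * μ.real (ball (0 : E) 1) := by
    rw [measureReal_congr hae, measureReal_def, Measure.addHaar_ball_of_pos μ x hr,
      ENNReal.toReal_mul, ENNReal.toReal_ofReal (by positivity), measureReal_def]
  have hsub : (ball x r \ {x} : Set E) ⊆ D := sdiff_subset.trans hball
  rw [← hvol]
  calc c * μ.real (ball x r \ {x}) ≤ ∫ y in ball x r \ {x}, G y ∂μ :=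
        setIntegral_ge_of_const_le_real (measurableSet_ball.diff (measurableSet_singleton x))
          (measure_mono sdiff_subset |>.trans_lt measure_ball_lt_top).ne
          (fun y hy => hle y hy.1 hy.2) (hG.mono_set hsub)
    _ ≤ ∫ y in D, G y ∂μ := by
        refine setIntegral_mono_set hG ?_ (LE.le.eventuallyLE hsub)
        filter_upwards [ae_restrict_mem hD] with y hy using hG0 y hy

end RadialIntegrals

theorem measurable_indicator_Ioi_of_monotoneOn {f : ℝ → ℝ} (hf : MonotoneOn f (Set.Ioi 0))
    (hpos : ∀ r, 0 < r → 0 < f r) : Measurable ((Set.Ioi 0).indicator f) := by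
  refine Monotone.measurable fun r s hrs => ?_
  by_cases hr : 0 < r
  · have hs : 0 < s := hr.trans_le hrs
    simpa [hr, hs] using hf hr hs hrs
  · rw [Set.indicator_of_notMem (by simpa using hr)]
    exact Set.indicator_nonneg (fun t ht => (hpos t ht).le) s

theorem ratio_comp_inv_bounds {Φ ψ : ℝ → ℝ} {b₁ b₂ γ₁ γ₂ : ℝ}
    (hΦpos : ∀ r, 0 < r → 0 < Φ r) (hΦmono : StrictMonoOn Φ (Set.Ioi 0))
    (hψscale : ∀ r R : ℝ, 0 < r → r ≤ R →
      b₁ * (R / r) ^ γ₁ ≤ ψ R / ψ r ∧ ψ R / ψ r ≤ b₂ * (R / r) ^ γ₂)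
    {r R : ℝ} (hr : 0 < r) (hrR : r ≤ R) :
    b₁ * (Φ R / Φ r) ^ γ₁ ≤ (ψ ((Φ R)⁻¹))⁻¹ / (ψ ((Φ r)⁻¹))⁻¹ ∧
      (ψ ((Φ R)⁻¹))⁻¹ / (ψ ((Φ r)⁻¹))⁻¹ ≤ b₂ * (Φ R / Φ r) ^ γ₂ := by
  have hR : 0 < R := hr.trans_le hrR
  have h := hψscale (Φ R)⁻¹ (Φ r)⁻¹ (inv_pos.2 (hΦpos R hR))
    (inv_anti₀ (hΦpos r hr) (hΦmono.monotoneOn hr hR hrR))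
  have e1 : (Φ r)⁻¹ / (Φ R)⁻¹ = Φ R / Φ r := by rw [inv_div_inv]
  have e2 : (ψ ((Φ R)⁻¹))⁻¹ / (ψ ((Φ r)⁻¹))⁻¹ = ψ ((Φ r)⁻¹) / ψ ((Φ R)⁻¹) := by
    rw [inv_div_inv]
  rwa [e1, ← e2] at h

theorem weak_scaling_lower_trans {t P Q c b δ γ : ℝ} (ht : 0 < t) (hc : 0 < c) (hb : 0 < b)
    (hγ : 0 < γ) (hP : c * t ^ (2 * δ) ≤ P) (hQ : b * P ^ γ ≤ Q) :
    b * c ^ γ * t ^ (2 * δ * γ) ≤ Q := by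
  refine le_trans ?_ hQ
  rw [mul_assoc, Real.rpow_mul ht.le, ← Real.mul_rpow hc.le (by positivity)]
  gcongr

theorem weak_scaling_upper_trans {t P Q c b δ γ : ℝ} (ht : 0 < t) (hc : 0 < c) (hb : 0 < b)
    (hγ : 0 < γ) (hP0 : 0 < P) (hP : P ≤ c * t ^ (2 * δ)) (hQ : Q ≤ b * P ^ γ) :
    Q ≤ b * c ^ γ * t ^ (2 * δ * γ) := by
  refine hQ.trans ?_
  rw [mul_assoc, Real.rpow_mul ht.le, ← Real.mul_rpow hc.le (by positivity)]
  gcongr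

theorem div_sqrt_le_of_weak_scaling {t P Q c b δ γ : ℝ} (ht : 0 < t) (hc : 0 < c) (hb : 0 < b)
    (hγ : γ < 1 / 2) (hP : c * t ^ (2 * δ) ≤ P) (hQ : Q ≤ b * P ^ γ) :
    Q / √P ≤ b * c ^ (γ - 1 / 2) * t ^ (-(2 * δ * (1 / 2 - γ))) := by
  have hP0 : 0 < P := lt_of_lt_of_le (by positivity) hP
  calc Q / √P ≤ b * P ^ γ / √P := by gcongr
    _ = b * P ^ (γ - 1 / 2) := by
        rw [Real.rpow_sub hP0, Real.sqrt_eq_rpow, mul_div_assoc]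
    _ ≤ b * (c * t ^ (2 * δ)) ^ (γ - 1 / 2) := by
        refine mul_le_mul_of_nonneg_left ?_ hb.le
        exact Real.rpow_le_rpow_of_nonpos (by positivity) hP (by linarith)
    _ = b * c ^ (γ - 1 / 2) * t ^ (-(2 * δ * (1 / 2 - γ))) := by
        rw [Real.mul_rpow hc.le (by positivity), ← Real.rpow_mul ht.le, mul_assoc]
        ring_nf

theorem truncated_kernel_le {Φ ψ : ℝ → ℝ} {c₁ b₁ b₂ δ₁ γ₁ γ₂ : ℝ}
    (hΦpos : ∀ r, 0 < r → 0 < Φ r) (hΦmono : StrictMonoOn Φ (Set.Ioi 0))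
    (hψpos : ∀ x : ℝ, 0 < x → 0 < ψ x) (hc₁ : 0 < c₁) (hb₁ : 0 < b₁) (hb₂ : 0 < b₂)
    (hγ₁ : 0 < γ₁) (hγ₂ : γ₂ < 1 / 2)
    (hΦscale : ∀ r R : ℝ, 0 < r → r ≤ R → c₁ * (R / r) ^ (2 * δ₁) ≤ Φ R / Φ r)
    (hψscale : ∀ r R : ℝ, 0 < r → r ≤ R →
      b₁ * (R / r) ^ γ₁ ≤ ψ R / ψ r ∧ ψ R / ψ r ≤ b₂ * (R / r) ^ γ₂)
    {e : ℝ} (he : 0 < e) (he₁ : e ≤ 2 * δ₁ * γ₁) (he₂ : e ≤ 2 * δ₁ * (1 / 2 - γ₂))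
    {r δ : ℝ} (hr : 0 < r) (hδ : 0 < δ) :
    min (√(Φ δ) / √(Φ r)) 1 * (ψ ((Φ r)⁻¹))⁻¹ ≤
      ((b₁ * c₁ ^ γ₁)⁻¹ + b₂ * c₁ ^ (γ₂ - 1 / 2)) * (ψ ((Φ δ)⁻¹))⁻¹ *
        min ((r / δ) ^ e) ((r / δ) ^ (-e)) := by
  have hkr : 0 < (ψ ((Φ r)⁻¹))⁻¹ := inv_pos.2 (hψpos _ (inv_pos.2 (hΦpos r hr)))
  have hkδ : 0 < (ψ ((Φ δ)⁻¹))⁻¹ := inv_pos.2 (hψpos _ (inv_pos.2 (hΦpos δ hδ)))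
  have hA₁ : 0 < b₁ * c₁ ^ γ₁ := by positivity
  have hA₂ : 0 < b₂ * c₁ ^ (γ₂ - 1 / 2) := by positivity
  rcases le_total r δ with h | h
  · have ht : 1 ≤ δ / r := (one_le_div hr).2 h
    have ht0 : 0 < δ / r := by positivity
    have hQ := weak_scaling_lower_trans ht0 hc₁ hb₁ hγ₁ (hΦscale r δ hr h)
      (ratio_comp_inv_bounds hΦpos hΦmono hψscale hr h).1
    have hmin : min ((r / δ) ^ e) ((r / δ) ^ (-e)) = ((δ / r) ^ e)⁻¹ := by
      rw [← inv_div δ r, Real.inv_rpow ht0.le, Real.inv_rpow ht0.le, ← Real.rpow_neg ht0.le,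
        ← Real.rpow_neg ht0.le, neg_neg]
      exact min_eq_left (Real.rpow_le_rpow_of_exponent_le ht (by linarith))
    have hQe : b₁ * c₁ ^ γ₁ * (δ / r) ^ e ≤ (ψ ((Φ δ)⁻¹))⁻¹ / (ψ ((Φ r)⁻¹))⁻¹ :=
      le_trans (mul_le_mul_of_nonneg_left (Real.rpow_le_rpow_of_exponent_le ht he₁) hA₁.le) hQ
    have hte : 0 < (δ / r) ^ e := by positivity
    rw [hmin]
    rw [le_div_iff₀ hkr] at hQe
    calc min (√(Φ δ) / √(Φ r)) 1 * (ψ ((Φ r)⁻¹))⁻¹ ≤ 1 * (ψ ((Φ r)⁻¹))⁻¹ :=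
          mul_le_mul_of_nonneg_right (min_le_right _ _) hkr.le
      _ ≤ (b₁ * c₁ ^ γ₁)⁻¹ * (ψ ((Φ δ)⁻¹))⁻¹ * ((δ / r) ^ e)⁻¹ := by
          rw [one_mul, ← div_eq_mul_inv, le_div_iff₀ hte, le_inv_mul_iff₀ hA₁]
          linarith
      _ ≤ _ := by
          gcongr
          linarith
  · have ht : 1 ≤ r / δ := (one_le_div hδ).2 h
    have ht0 : 0 < r / δ := by positivity
    have hQ := div_sqrt_le_of_weak_scaling ht0 hc₁ hb₂ hγ₂ (hΦscale δ r hδ h)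
      (ratio_comp_inv_bounds hΦpos hΦmono hψscale hδ h).2
    have hmin : min ((r / δ) ^ e) ((r / δ) ^ (-e)) = (r / δ) ^ (-e) :=
      min_eq_right (Real.rpow_le_rpow_of_exponent_le ht (by linarith))
    have hQe : (ψ ((Φ r)⁻¹))⁻¹ / (ψ ((Φ δ)⁻¹))⁻¹ / √(Φ r / Φ δ) ≤
        b₂ * c₁ ^ (γ₂ - 1 / 2) * (r / δ) ^ (-e) :=
      hQ.trans (mul_le_mul_of_nonneg_left
        (Real.rpow_le_rpow_of_exponent_le ht (by linarith)) hA₂.le)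
    rw [hmin]
    calc min (√(Φ δ) / √(Φ r)) 1 * (ψ ((Φ r)⁻¹))⁻¹
        ≤ √(Φ δ) / √(Φ r) * (ψ ((Φ r)⁻¹))⁻¹ :=
          mul_le_mul_of_nonneg_right (min_le_left _ _) hkr.le
      _ = (ψ ((Φ r)⁻¹))⁻¹ / (ψ ((Φ δ)⁻¹))⁻¹ / √(Φ r / Φ δ) * (ψ ((Φ δ)⁻¹))⁻¹ := by
          have h1 := Real.sqrt_pos.2 (hΦpos r hr)
          have h2 := Real.sqrt_pos.2 (hΦpos δ hδ)
          have h3 := hψpos _ (inv_pos.2 (hΦpos r hr))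
          have h4 := hψpos _ (inv_pos.2 (hΦpos δ hδ))
          rw [Real.sqrt_div (hΦpos r hr).le]
          generalize ψ ((Φ r)⁻¹) = p at *
          generalize ψ ((Φ δ)⁻¹) = q at *
          field_simp
      _ ≤ b₂ * c₁ ^ (γ₂ - 1 / 2) * (r / δ) ^ (-e) * (ψ ((Φ δ)⁻¹))⁻¹ :=
          mul_le_mul_of_nonneg_right hQe hkδ.le
      _ = b₂ * c₁ ^ (γ₂ - 1 / 2) * (ψ ((Φ δ)⁻¹))⁻¹ * (r / δ) ^ (-e) := by ring
      _ ≤ _ := by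
          gcongr
          linarith [inv_pos.2 hA₁]

theorem kernel_ge {Φ ψ : ℝ → ℝ} {c₂ b₁ b₂ δ₂ γ₁ γ₂ : ℝ}
    (hΦpos : ∀ r, 0 < r → 0 < Φ r) (hΦmono : StrictMonoOn Φ (Set.Ioi 0))
    (hψpos : ∀ x : ℝ, 0 < x → 0 < ψ x) (hc₂ : 0 < c₂) (hb₂ : 0 < b₂) (hγ₂ : 0 < γ₂)
    (hexp : 2 * δ₂ * γ₂ ≤ 1)
    (hΦscale : ∀ r R : ℝ, 0 < r → r ≤ R → Φ R / Φ r ≤ c₂ * (R / r) ^ (2 * δ₂))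
    (hψscale : ∀ r R : ℝ, 0 < r → r ≤ R →
      b₁ * (R / r) ^ γ₁ ≤ ψ R / ψ r ∧ ψ R / ψ r ≤ b₂ * (R / r) ^ γ₂)
    {d : ℕ} (hd : 1 ≤ d) {r δ : ℝ} (hr : 0 < r) (hrδ : r ≤ δ) :
    (b₂ * c₂ ^ γ₂)⁻¹ * (ψ ((Φ δ)⁻¹))⁻¹ * (δ ^ d)⁻¹ ≤ 1 / (r ^ d * ψ ((Φ r)⁻¹)) := by
  have hδ : 0 < δ := hr.trans_le hrδ
  have hkr : 0 < (ψ ((Φ r)⁻¹))⁻¹ := inv_pos.2 (hψpos _ (inv_pos.2 (hΦpos r hr)))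
  have hA : 0 < b₂ * c₂ ^ γ₂ := by positivity
  have ht : 1 ≤ δ / r := (one_le_div hr).2 hrδ
  have hQ := weak_scaling_upper_trans (by positivity) hc₂ hb₂ hγ₂
    (div_pos (hΦpos δ hδ) (hΦpos r hr)) (hΦscale r δ hr hrδ)
    (ratio_comp_inv_bounds hΦpos hΦmono hψscale hr hrδ).2
  have hpow : (δ / r) ^ (2 * δ₂ * γ₂) ≤ (δ / r) ^ d := by
    rw [← Real.rpow_natCast]
    exact Real.rpow_le_rpow_of_exponent_le ht (hexp.trans (by exact_mod_cast hd))
  have hQd := hQ.trans (mul_le_mul_of_nonneg_left hpow hA.le)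
  rw [div_le_iff₀ hkr] at hQd
  have hrd : 0 < r ^ d := by positivity
  have hδd : 0 < δ ^ d := by positivity
  calc (b₂ * c₂ ^ γ₂)⁻¹ * (ψ ((Φ δ)⁻¹))⁻¹ * (δ ^ d)⁻¹
      ≤ (b₂ * c₂ ^ γ₂)⁻¹ * (b₂ * c₂ ^ γ₂ * (δ / r) ^ d * (ψ ((Φ r)⁻¹))⁻¹) * (δ ^ d)⁻¹ := by
        gcongr
    _ = 1 / (r ^ d * ψ ((Φ r)⁻¹)) := by
        rw [div_pow, one_div, mul_inv]
        field_simp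



/-- Statement 9 (Lemma 6.7 of the paper, analytic form): if the upper weak scaling index of
`ψ` is below `1/2`, then `∫_D G̃(x,y) dy ≍ 1/ψ(Φ(δ_D(x))⁻¹)`. -/
theorem stmt_10 (d : ℕ) (hd : 2 ≤ d)
    (D : Set (EuclideanSpace ℝ (Fin d)))
    (hDopen : IsOpen D) (hDne : D.Nonempty) (hDbdd : Bornology.IsBounded D)
    (Φ : ℝ → ℝ)
    (hΦmono : StrictMonoOn Φ (Set.Ioi 0))
    (hΦbij : Set.BijOn Φ (Set.Ioi 0) (Set.Ioi 0))
    (c₁ c₂ δ₁ δ₂ : ℝ) (hc₁ : 0 < c₁) (hc₂ : 0 < c₂)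
    (hδ₁ : 0 < δ₁) (hδ : δ₁ ≤ δ₂) (hδ₂ : δ₂ < 1)
    (hΦscale : ∀ r R : ℝ, 0 < r → r ≤ R →
      c₁ * (R / r) ^ (2 * δ₁) ≤ Φ R / Φ r ∧ Φ R / Φ r ≤ c₂ * (R / r) ^ (2 * δ₂))
    (ψ : ℝ → ℝ) (hψpos : ∀ x : ℝ, 0 < x → 0 < ψ x)
    (hψmono : MonotoneOn ψ (Set.Ioi 0))
    (b₁ b₂ γ₁ γ₂ : ℝ) (hb₁ : 0 < b₁) (hb₂ : 0 < b₂)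
    (hγ₁ : 0 < γ₁) (hγ : γ₁ ≤ γ₂) (hγ₂ : γ₂ < 1 / 2)
    (hψscale : ∀ r R : ℝ, 0 < r → r ≤ R →
      b₁ * (R / r) ^ γ₁ ≤ ψ R / ψ r ∧ ψ R / ψ r ≤ b₂ * (R / r) ^ γ₂) :
    ∃ C : ℝ, 1 ≤ C ∧ ∀ x ∈ D,
      C⁻¹ * (ψ ((Φ (Metric.infDist x Dᶜ))⁻¹))⁻¹ ≤
        (∫ y in D,
          min (Real.sqrt (Φ (Metric.infDist x Dᶜ)) / Real.sqrt (Φ (dist x y))) 1 *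
            min (Real.sqrt (Φ (Metric.infDist y Dᶜ)) / Real.sqrt (Φ (dist x y))) 1 *
            (1 / (dist x y ^ d * ψ ((Φ (dist x y))⁻¹)))) ∧
      (∫ y in D,
          min (Real.sqrt (Φ (Metric.infDist x Dᶜ)) / Real.sqrt (Φ (dist x y))) 1 *
            min (Real.sqrt (Φ (Metric.infDist y Dᶜ)) / Real.sqrt (Φ (dist x y))) 1 *
            (1 / (dist x y ^ d * ψ ((Φ (dist x y))⁻¹)))) ≤
        C * (ψ ((Φ (Metric.infDist x Dᶜ))⁻¹))⁻¹ := by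
  have hΦpos : ∀ r, 0 < r → 0 < Φ r := fun r hr => hΦbij.mapsTo hr
  have hγ₂0 : 0 < γ₂ := hγ₁.trans_le hγ
  have hfin : Module.finrank ℝ (EuclideanSpace ℝ (Fin d)) = d := by simp
  have : Nonempty (Fin d) := ⟨⟨0, by omega⟩⟩
  have hDc : (Dᶜ).Nonempty := by
    rw [Set.nonempty_compl]
    rintro rfl
    exact NormedSpace.unbounded_univ ℝ (EuclideanSpace ℝ (Fin d)) hDbdd
  have hdist_pos : ∀ y ∈ D, 0 < Metric.infDist y Dᶜ := fun y hy =>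
    (hDopen.isClosed_compl.notMem_iff_infDist_pos hDc).1 (by simpa using hy)
  obtain ⟨e, he, he₁, he₂⟩ :
      ∃ e : ℝ, 0 < e ∧ e ≤ 2 * δ₁ * γ₁ ∧ e ≤ 2 * δ₁ * (1 / 2 - γ₂) :=
    ⟨min (2 * δ₁ * γ₁) (2 * δ₁ * (1 / 2 - γ₂)),
      lt_min (by positivity) (mul_pos (by positivity) (by linarith)),
      min_le_left _ _, min_le_right _ _⟩
  set A : ℝ := (b₁ * c₁ ^ γ₁)⁻¹ + b₂ * c₁ ^ (γ₂ - 1 / 2)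
  have hA0 : 0 < A := by positivity
  set M : ℝ := ∫ z : EuclideanSpace ℝ (Fin d),
    (‖z‖ ^ Module.finrank ℝ (EuclideanSpace ℝ (Fin d)))⁻¹ * min (‖z‖ ^ e) (‖z‖ ^ (-e))
  have hM0 : 0 ≤ M := integral_nonneg fun z => by positivity
  set V : ℝ := volume.real (Metric.ball (0 : EuclideanSpace ℝ (Fin d)) 1)
  have hV0 : 0 < V := ENNReal.toReal_pos
    (Metric.measure_ball_pos volume _ one_pos).ne' measure_ball_lt_top.ne
  set B : ℝ := b₂ * c₂ ^ γ₂
  have hB0 : 0 < B := by positivity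
  have hL0 : 0 < B * 2 ^ d / V := by positivity
  have hAM0 : 0 ≤ A * M := mul_nonneg hA0.le hM0
  refine ⟨1 + A * M + B * 2 ^ d / V, by linarith, fun x hx => ?_⟩
  set δ : ℝ := Metric.infDist x Dᶜ
  have hδ : 0 < δ := hdist_pos x hx
  have hkδ : 0 < (ψ ((Φ δ)⁻¹))⁻¹ := inv_pos.2 (hψpos _ (inv_pos.2 (hΦpos δ hδ)))
  set G : EuclideanSpace ℝ (Fin d) → ℝ := fun y =>
    min (√(Φ δ) / √(Φ (dist x y))) 1 * min (√(Φ (Metric.infDist y Dᶜ)) / √(Φ (dist x y))) 1 *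
      (1 / (dist x y ^ d * ψ ((Φ (dist x y))⁻¹))) with hG
  have hd0 : d ≠ 0 := by omega
  have hGself : G x = 0 := by simp [hG, hd0]
  have hGmeas : AEStronglyMeasurable G (volume.restrict D) := by
    have hΦm := measurable_indicator_Ioi_of_monotoneOn hΦmono.monotoneOn hΦpos
    have hkm := measurable_indicator_Ioi_of_monotoneOn (f := fun r => (ψ ((Φ r)⁻¹))⁻¹)
      (fun r hr s hs hrs => by
        have hr' := inv_pos.2 (hΦpos r hr)
        have hs' := inv_pos.2 (hΦpos s hs)
        exact inv_anti₀ (hψpos _ hs') (hψmono hs' hr'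
          (inv_anti₀ (hΦpos r hr) (hΦmono.monotoneOn hr hs hrs))))
      (fun r hr => inv_pos.2 (hψpos _ (inv_pos.2 (hΦpos r hr))))
    have hdm : Measurable fun y : EuclideanSpace ℝ (Fin d) => dist x y := by fun_prop
    have him : Measurable fun y : EuclideanSpace ℝ (Fin d) => Metric.infDist y Dᶜ :=
      (Metric.continuous_infDist_pt _).measurable
    have h1 := (hΦm.comp hdm).sqrt
    have h2 := (hΦm.comp him).sqrt
    have h3 := ((measurable_const (a := √(Φ δ))).div h1).min (measurable_const (a := (1 : ℝ)))
    have h4 := (h2.div h1).min (measurable_const (a := (1 : ℝ)))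
    have h5 := ((hdm.pow_const d).inv).mul (hkm.comp hdm)
    refine ((h3.mul h4).mul h5).aestronglyMeasurable.congr ?_
    filter_upwards [ae_restrict_mem hDopen.measurableSet] with y hy
    rcases eq_or_ne x y with rfl | hxy
    · rw [hGself]
      simp
    · have hr := dist_pos.2 hxy
      have hi := hdist_pos y hy
      simp [hG, hr, hi, mul_comm]
  have hG0 : ∀ y ∈ D, 0 ≤ G y := fun y _ => by
    rcases eq_or_ne x y with rfl | hxy
    · exact hGself.ge
    · have h1 := hψpos _ (inv_pos.2 (hΦpos _ (dist_pos.2 hxy)))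
      simp only [hG]
      positivity
  have hGle : ∀ y ∈ D, G y ≤ A * (ψ ((Φ δ)⁻¹))⁻¹ *
      ((dist x y ^ Module.finrank ℝ (EuclideanSpace ℝ (Fin d)))⁻¹ *
        min ((dist x y / δ) ^ e) ((dist x y / δ) ^ (-e))) := fun y _ => by
    rcases eq_or_ne x y with rfl | hxy
    · rw [hGself]
      simp [hfin, hd0]
    · have hr := dist_pos.2 hxy
      have hψr := hψpos _ (inv_pos.2 (hΦpos _ hr))
      have hk := truncated_kernel_le hΦpos hΦmono hψpos hc₁ hb₁ hb₂ hγ₁ hγ₂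
        (fun r R h h' => (hΦscale r R h h').1) hψscale he he₁ he₂ hr hδ
      rw [hfin]
      calc G y ≤ min (√(Φ δ) / √(Φ (dist x y))) 1 * 1 *
            (1 / (dist x y ^ d * ψ ((Φ (dist x y))⁻¹))) := by
            simp only [hG]
            gcongr
            exact min_le_right _ _
        _ = (dist x y ^ d)⁻¹ *
            (min (√(Φ δ) / √(Φ (dist x y))) 1 * (ψ ((Φ (dist x y))⁻¹))⁻¹) := by
            rw [one_div, mul_inv]
            ring
        _ ≤ (dist x y ^ d)⁻¹ * (A * (ψ ((Φ δ)⁻¹))⁻¹ *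
            min ((dist x y / δ) ^ e) ((dist x y / δ) ^ (-e))) := by
            gcongr
        _ = _ := by ring
  obtain ⟨hGint, hupper⟩ := integrableOn_and_setIntegral_le_of_radial_bound volume he
    hDopen.measurableSet hGmeas hδ (by positivity) hG0 hGle
  have hball : Metric.ball x (δ / 2) ⊆ D := fun y hy => by
    by_contra hyD
    have h1 : δ ≤ dist x y := Metric.infDist_le_dist_of_mem hyD
    rw [Metric.mem_ball'] at hy
    linarith
  have hlower := mul_measureReal_ball_le_setIntegral volume hDopen.measurableSet hGint hG0
    (half_pos hδ) hball (c := B⁻¹ * (ψ ((Φ δ)⁻¹))⁻¹ * (δ ^ d)⁻¹) (fun y hy hyx => by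
      have hr : 0 < dist x y := dist_pos.2 hyx.symm
      rw [Metric.mem_ball'] at hy
      have hδy : dist x y ≤ Metric.infDist y Dᶜ := by
        have : δ ≤ Metric.infDist y Dᶜ + dist x y := Metric.infDist_le_infDist_add_dist
        linarith
      have hmin : ∀ s, dist x y ≤ s → min (√(Φ s) / √(Φ (dist x y))) 1 = 1 := fun s hs =>
        min_eq_right ((one_le_div (Real.sqrt_pos.2 (hΦpos _ hr))).2
          (Real.sqrt_le_sqrt (hΦmono.monotoneOn hr (hr.trans_le hs) hs)))
      simp only [hG]
      rw [hmin δ (by linarith), hmin _ hδy, one_mul, one_mul]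
      exact kernel_ge hΦpos hΦmono hψpos hc₂ hb₂ hγ₂0 (by nlinarith)
        (fun r R h h' => (hΦscale r R h h').2) hψscale (by omega) hr (by linarith))
  constructor
  · refine le_trans ?_ hlower
    rw [hfin]
    have heq : B⁻¹ * (ψ ((Φ δ)⁻¹))⁻¹ * (δ ^ d)⁻¹ * ((δ / 2) ^ d * V) =
        (B * 2 ^ d / V)⁻¹ * (ψ ((Φ δ)⁻¹))⁻¹ := by
      rw [div_pow]
      field_simp
    rw [heq]
    gcongr
    linarith
  · refine hupper.trans ?_
    rw [mul_right_comm]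
    gcongr
    linarith
end
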